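/- arXiv:2501.10599 — 2 statements merged into one kernel-verified Lean document; each statement's English description precedes it below -/
import Mathlib

section
/- Let p > 1 and a, b, L > 0. There exists a C¹ weak solution u of −Δ^{a,b}_p u = λ^{a,b}_{1,p}(0,L) |u|^{p−2} u on (0,L) with u(0) = u(L) = 0, u > 0 on (0,L), such that −u is also a weak solution of the same equation, if and only if a = b. (Equivalently, the eigenspace of λ^{a,b}_{1,p}(0,L) consists of two collinear half-lines if and only if a = b.) -/
open Set

/-- `u` is C¹ on `[α, γ]` with derivative `u'` there. -/
def C1On (α γ : ℝ) (u u' : ℝ → ℝ) : Prop :=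
  (∀ t ∈ Set.Icc α γ, HasDerivWithinAt u (u' t) (Set.Icc α γ) t) ∧
  ContinuousOn u' (Set.Icc α γ)

/-- Admissible functions on `[0, L]`: C¹ with zero boundary values. -/
def Adm (L : ℝ) (u u' : ℝ → ℝ) : Prop :=
  C1On 0 L u u' ∧ u 0 = 0 ∧ u L = 0

/-- The asymmetric energy integrand `a^p (s⁺)^p + b^p (s⁻)^p`. -/
noncomputable def asymE (p a b s : ℝ) : ℝ :=
  a ^ p * (max s 0) ^ p + b ^ p * (max (-s) 0) ^ p

/-- The asymmetric flux `a^p (s⁺)^(p-1) - b^p (s⁻)^(p-1)`. -/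
noncomputable def asymFlux (p a b s : ℝ) : ℝ :=
  a ^ p * (max s 0) ^ (p - 1) - b ^ p * (max (-s) 0) ^ (p - 1)

/-- The first Dirichlet eigenvalue `λ^{a,b}_{1,p}(0,L)`, as the infimum of the
asymmetric energy over normalized admissible functions. -/
noncomputable def lam1 (p a b L : ℝ) : ℝ :=
  sInf { E : ℝ | ∃ u u' : ℝ → ℝ, Adm L u u' ∧
    (∫ t in (0:ℝ)..L, |u t| ^ p) = 1 ∧
    E = ∫ t in (0:ℝ)..L, asymE p a b (u' t) }

/-- `u` (a C¹ function on `[0,L]` with derivative `u'` and zero boundary values)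
is a weak solution of `-Δ^{a,b}_p u = g` on `(0,L)`. -/
def IsWeakSol (p a b L : ℝ) (u u' g : ℝ → ℝ) : Prop :=
  Adm L u u' ∧
  ∀ φ φ' : ℝ → ℝ, Adm L φ φ' →
    (∫ t in (0:ℝ)..L, asymFlux p a b (u' t) * φ' t) =
      ∫ t in (0:ℝ)..L, g t * φ t

open Set Filter Topology MeasureTheory

noncomputable def psi (p s : ℝ) : ℝ := (max s 0) ^ (p - 1) - (max (-s) 0) ^ (p - 1)

lemma psi_of_nonneg {p s : ℝ} (hp : 1 < p) (hs : 0 ≤ s) : psi p s = s ^ (p - 1) := by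
  rw [psi, max_eq_left hs, max_eq_right (by linarith), Real.zero_rpow (by linarith), sub_zero]

lemma psi_neg (p s : ℝ) : psi p (-s) = - psi p s := by
  simp [psi]

lemma psi_mul_self {p s : ℝ} (hp : 1 < p) : psi p s * s = |s| ^ p := by
  rcases le_total 0 s with h | h
  · rw [psi_of_nonneg hp h, abs_of_nonneg h]
    nth_rw 2 [← Real.rpow_one s]
    rw [← Real.rpow_add_of_nonneg h (by linarith) (by norm_num)]; congr 1; ring
  · have h' : 0 ≤ -s := by linarith
    have := psi_of_nonneg hp h'
    rw [psi_neg] at this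
    rw [abs_of_nonpos h, show psi p s * s = - psi p s * (-s) by ring, this]
    nth_rw 2 [← Real.rpow_one (-s)]
    rw [← Real.rpow_add_of_nonneg h' (by linarith) (by norm_num)]; congr 1; ring

lemma psi_abs {p s : ℝ} (hp : 1 < p) : |psi p s| = |s| ^ (p - 1) := by
  rcases le_total 0 s with h | h
  · rw [psi_of_nonneg hp h, abs_of_nonneg h, abs_of_nonneg (by positivity)]
  · have h' : 0 ≤ -s := by linarith
    have := psi_of_nonneg hp h'
    rw [psi_neg] at this
    rw [abs_of_nonpos h, ← abs_neg, this, abs_of_nonneg (by positivity)]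

lemma psi_mul {p k s : ℝ} (hp : 1 < p) (hk : 0 < k) : psi p (k * s) = k ^ (p - 1) * psi p s := by
  rcases le_total 0 s with h | h
  · rw [psi_of_nonneg hp h, psi_of_nonneg hp (by positivity), Real.mul_rpow hk.le h]
  · have h' : 0 ≤ -s := by linarith
    have h1 := psi_of_nonneg hp h'
    have h2 := psi_of_nonneg (s := k * (-s)) hp (by positivity)
    rw [Real.mul_rpow hk.le h', ← h1, mul_neg, psi_neg, psi_neg] at h2
    linarith

lemma psi_cont {p : ℝ} (hp : 1 < p) : Continuous (psi p) := by
  unfold psi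
  exact ((continuous_id.max continuous_const).rpow_const fun x => Or.inr (by linarith)).sub
    ((continuous_id.neg.max continuous_const).rpow_const fun x => Or.inr (by linarith))

lemma asymFlux_same (p a s : ℝ) : asymFlux p a a s = a ^ p * psi p s := by
  simp [asymFlux, psi]; ring

lemma asymE_same {p : ℝ} (a s : ℝ) (hp : 1 < p) : asymE p a a s = a ^ p * |s| ^ p := by
  rw [asymE, ← mul_add]
  rcases le_total 0 s with h | h
  · rw [max_eq_left h, max_eq_right (by linarith), Real.zero_rpow (by linarith), add_zero, abs_of_nonneg h]
  · rw [max_eq_right h, max_eq_left (by linarith), Real.zero_rpow (by linarith), zero_add, abs_of_nonpos h]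

lemma abs_rpow_mul_self {p u : ℝ} (hp : 1 < p) (hu : 0 ≤ u) : |u| ^ (p - 2) * u = u ^ (p - 1) := by
  rcases hu.eq_or_lt with rfl | h
  · rw [mul_zero, Real.zero_rpow (by linarith)]
  · rw [abs_of_pos h]
    nth_rw 2 [← Real.rpow_one u]
    rw [← Real.rpow_add h]; congr 1; ring

lemma C1On.hasDerivAt {α γ : ℝ} {u u' : ℝ → ℝ} (h : C1On α γ u u') {t : ℝ} (ht : t ∈ Ioo α γ) :
    HasDerivAt u (u' t) t :=
  (h.1 t (Ioo_subset_Icc_self ht)).hasDerivAt (Icc_mem_nhds ht.1 ht.2)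

lemma C1On.cont {α γ : ℝ} {u u' : ℝ → ℝ} (h : C1On α γ u u') : ContinuousOn u (Icc α γ) :=
  fun t ht => (h.1 t ht).continuousWithinAt

/-- Data of a positive eigenfunction. -/
structure Eig (p L μ : ℝ) (u u' : ℝ → ℝ) : Prop where
  adm : Adm L u u'
  pos : ∀ t ∈ Ioo (0:ℝ) L, 0 < u t
  ode : ∀ t ∈ Ioo (0:ℝ) L, HasDerivAt (fun s => psi p (u' s)) (-(μ * (u t) ^ (p - 1))) t

lemma Eig.nonneg {p L μ : ℝ} {u u' : ℝ → ℝ} (h : Eig p L μ u u') : ∀ t ∈ Icc (0:ℝ) L, 0 ≤ u t := by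
  intro t ht
  rcases ht.1.eq_or_lt with h0 | h0
  · rw [← h0, h.adm.2.1]
  rcases ht.2.eq_or_lt with h1 | h1
  · rw [h1, h.adm.2.2]
  exact (h.pos t ⟨h0, h1⟩).le

lemma Eig.weak {p L μ : ℝ} {u u' : ℝ → ℝ} (hp : 1 < p) (hL : 0 < L) (h : Eig p L μ u u')
    (φ φ' : ℝ → ℝ) (hφ : Adm L φ φ') :
    (∫ t in (0:ℝ)..L, psi p (u' t) * φ' t) = ∫ t in (0:ℝ)..L, μ * (u t) ^ (p - 1) * φ t := by
  have hz : ContinuousOn (fun s => psi p (u' s)) (Icc 0 L) := (psi_cont hp).comp_continuousOn h.adm.1.2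
  have hu : ContinuousOn (fun s => μ * u s ^ (p - 1)) (Icc 0 L) :=
    continuousOn_const.mul (h.adm.1.cont.rpow_const fun x _ => Or.inr (by linarith))
  have i1 : IntervalIntegrable (fun t => psi p (u' t) * φ' t) volume 0 L :=
    (hz.mul hφ.1.2).intervalIntegrable_of_Icc hL.le
  have i2 : IntervalIntegrable (fun t => μ * (u t) ^ (p - 1) * φ t) volume 0 L :=
    (hu.mul hφ.1.cont).intervalIntegrable_of_Icc hL.le
  have key := intervalIntegral.integral_eq_sub_of_hasDerivAt_of_le (a := 0) (b := L)
    (f := fun t => psi p (u' t) * φ t)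
    (f' := fun t => psi p (u' t) * φ' t - μ * (u t) ^ (p - 1) * φ t) hL.le
    (hz.mul hφ.1.cont)
    (fun t ht => by
      have := (h.ode t ht).mul (hφ.1.hasDerivAt ht)
      exact this.congr_deriv (by ring)) (i1.sub i2)
  rw [intervalIntegral.integral_sub i1 i2] at key
  simp only [hφ.2.1, hφ.2.2, mul_zero, sub_zero] at key
  linarith

lemma young_aux {p A B : ℝ} (hp : 1 < p) (hA : 0 ≤ A) (hB : 0 ≤ B) :
    p * (A ^ (p - 1) * B) ≤ B ^ p + (p - 1) * A ^ p := by
  have hc : Real.HolderConjugate p (p / (p - 1)) := Real.HolderConjugate.conjExponent hp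
  have := Real.young_inequality_of_nonneg hB (Real.rpow_nonneg hA (p - 1)) hc
  rw [← Real.rpow_mul hA, mul_div_cancel₀ _ (by linarith : p - 1 ≠ 0)] at this
  have hp0 : 0 < p := by linarith
  have h2 : p * (B ^ p / p + A ^ p / (p / (p - 1))) = B ^ p + (p - 1) * A ^ p := by
    have : p - 1 ≠ 0 := by linarith
    field_simp
  rw [← h2]
  calc p * (A ^ (p - 1) * B) = p * (B * A ^ (p - 1)) := by ring
    _ ≤ _ := mul_le_mul_of_nonneg_left this hp0.le

lemma Eig.picone {p L μ : ℝ} {u u' : ℝ → ℝ} (hp : 1 < p) (hL : 0 < L) (h : Eig p L μ u u')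
    (v v' : ℝ → ℝ) (hv : Adm L v v') (ε : ℝ) (hε : 0 < ε) :
    (∫ t in (0:ℝ)..L, μ * ((u t) ^ (p - 1) / (u t + ε) ^ (p - 1) * |v t| ^ p)) ≤
      ∫ t in (0:ℝ)..L, |v' t| ^ p := by
  have hp1 : 0 < p - 1 := by linarith
  have hz : ContinuousOn (fun s => psi p (u' s)) (Icc 0 L) := (psi_cont hp).comp_continuousOn h.adm.1.2
  have hue : ∀ t ∈ Icc 0 L, 0 < u t + ε := fun t ht => by linarith [h.nonneg t ht]
  have hu : ContinuousOn (fun s => (u s + ε) ^ (p - 1)) (Icc 0 L) :=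
    ((h.adm.1.cont.add continuousOn_const).rpow_const fun x _ => Or.inr (by linarith))
  have hu1 : ContinuousOn (fun s => (u s) ^ (p - 1)) (Icc 0 L) :=
    (h.adm.1.cont.rpow_const fun x _ => Or.inr (by linarith))
  have hvp : ContinuousOn (fun s => |v s| ^ p) (Icc 0 L) :=
    hv.1.cont.abs.rpow_const fun x _ => Or.inr (by linarith)
  have hvp' : ContinuousOn (fun s => |v' s| ^ p) (Icc 0 L) :=
    hv.1.2.abs.rpow_const fun x _ => Or.inr (by linarith)
  have hne : ∀ t ∈ Icc 0 L, (u t + ε) ^ (p - 1) ≠ 0 := fun t ht =>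
    (Real.rpow_pos_of_pos (hue t ht) _).ne'
  have c1 : ContinuousOn (fun t => μ * ((u t) ^ (p - 1) / (u t + ε) ^ (p - 1) * |v t| ^ p)) (Icc 0 L) :=
    continuousOn_const.mul ((hu1.div hu hne).mul hvp)
  have key := intervalIntegral.sub_le_integral_of_hasDeriv_right_of_le (a := 0) (b := L)
    (g := fun t => psi p (u' t) * |v t| ^ p / (u t + ε) ^ (p - 1))
    (g' := fun t => ((-(μ * (u t) ^ (p - 1)) * |v t| ^ p + psi p (u' t) * (p * |v t| ^ (p - 2) * v t * v' t))
       * (u t + ε) ^ (p - 1) - psi p (u' t) * |v t| ^ p * (u' t * (p - 1) * (u t + ε) ^ (p - 1 - 1))) / ((u t + ε) ^ (p - 1)) ^ 2)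
    (φ := fun t => |v' t| ^ p - μ * ((u t) ^ (p - 1) / (u t + ε) ^ (p - 1) * |v t| ^ p))
    hL.le ((hz.mul hvp).div hu hne)
    (fun t ht => by
      have ht' := Ioo_subset_Icc_self ht
      have d1 := h.ode t ht
      have d2 := (hasDerivAt_abs_rpow (v t) hp).comp t (hv.1.hasDerivAt ht)
      have d3 := ((h.adm.1.hasDerivAt ht).add_const ε).rpow_const (p := p - 1) (Or.inl (hue t ht').ne')
      exact ((d1.mul d2).div d3 (hne t ht')).hasDerivWithinAt)
    ((hvp'.sub c1).integrableOn_Icc)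
    (fun t ht => by
      have ht' := Ioo_subset_Icc_self ht
      have hU := hue t ht'
      have hz2 := psi_mul_self (s := u' t) hp
      have hz1 := psi_abs (s := u' t) hp
      have hy := young_aux (A := |u' t| * |v t| / (u t + ε)) (B := |v' t|) hp (by positivity) (by positivity)
      rw [Real.div_rpow (by positivity) hU.le, Real.div_rpow (by positivity) hU.le,
        Real.mul_rpow (by positivity) (by positivity), Real.mul_rpow (by positivity) (by positivity)] at hy
      set U := u t + ε
      have e1 : U ^ p = U ^ (p - 1) * U := by
        nth_rw 3 [← Real.rpow_one U]; rw [← Real.rpow_add hU]; congr 1; ring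
      have e2 : U ^ (p - 1 - 1) = U ^ (p - 1) / U := by
        rw [Real.rpow_sub hU (p-1) 1, Real.rpow_one]
      have hUp : 0 < U ^ (p - 1) := Real.rpow_pos_of_pos hU _
      have e3 : psi p (u' t) * (|v t| ^ (p - 2) * v t * v' t) ≤ |u' t| ^ (p - 1) * |v t| ^ (p - 1) * |v' t| := by
        have := abs_rpow_mul_self (u := |v t|) hp (abs_nonneg _)
        rw [abs_abs] at this
        calc _ ≤ |psi p (u' t) * (|v t| ^ (p - 2) * v t * v' t)| := le_abs_self _
          _ = _ := by
            rw [abs_mul, abs_mul, abs_mul, hz1, abs_of_nonneg (by positivity : 0 ≤ |v t| ^ (p - 2)), this]; ring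
      set P := U ^ (p - 1)
      rw [e1] at hy
      rw [e2]
      have e4 : ((-(μ * (u t) ^ (p - 1)) * |v t| ^ p + psi p (u' t) * (p * |v t| ^ (p - 2) * v t * v' t))
       * P - psi p (u' t) * |v t| ^ p * (u' t * (p - 1) * (P / U))) / P ^ 2
       = p * (psi p (u' t) * (|v t| ^ (p - 2) * v t * v' t)) / P - (p - 1) * (|u' t| ^ p * |v t| ^ p / (P * U)) - μ * ((u t) ^ (p - 1) / P * |v t| ^ p) := by
        rw [← hz2]; field_simp; ring
      rw [e4]
      have e5 : p * (psi p (u' t) * (|v t| ^ (p - 2) * v t * v' t)) / P ≤ p * (|u' t| ^ (p - 1) * |v t| ^ (p - 1) / P * |v' t|) := by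
        rw [div_mul_eq_mul_div, mul_div_assoc]
        have : 0 < p := by linarith
        gcongr
      linarith)
  have hp0 : p ≠ 0 := by linarith
  simp only [hv.2.1, hv.2.2, abs_zero, Real.zero_rpow hp0, mul_zero, zero_div, sub_zero] at key
  rw [intervalIntegral.integral_sub (hvp'.intervalIntegrable_of_Icc hL.le) (c1.intervalIntegrable_of_Icc hL.le)] at key
  linarith

lemma Eig.poincare {p L μ : ℝ} {u u' : ℝ → ℝ} (hp : 1 < p) (hL : 0 < L) (h : Eig p L μ u u')
    (v v' : ℝ → ℝ) (hv : Adm L v v') :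
    μ * (∫ t in (0:ℝ)..L, |v t| ^ p) ≤ ∫ t in (0:ℝ)..L, |v' t| ^ p := by
  have hvp : ContinuousOn (fun s => |v s| ^ p) (Icc 0 L) :=
    hv.1.cont.abs.rpow_const fun x _ => Or.inr (by linarith)
  have hu1 : ContinuousOn (fun s => (u s) ^ (p - 1)) (Icc 0 L) :=
    (h.adm.1.cont.rpow_const fun x _ => Or.inr (by linarith))
  have lim : Tendsto (fun ε : ℝ => ∫ t in (0:ℝ)..L, ((u t) ^ (p - 1) / (u t + ε) ^ (p - 1) * |v t| ^ p))
      (𝓝[>] 0) (𝓝 (∫ t in (0:ℝ)..L, |v t| ^ p)) := by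
    apply intervalIntegral.tendsto_integral_filter_of_dominated_convergence (fun t => |v t| ^ p)
    · filter_upwards [self_mem_nhdsWithin] with ε hε
      have hε : 0 < ε := hε
      rw [uIoc_of_le hL.le]
      have : ContinuousOn (fun t => ((u t) ^ (p - 1) / (u t + ε) ^ (p - 1) * |v t| ^ p)) (Icc 0 L) := by
        refine (hu1.div ((h.adm.1.cont.add continuousOn_const).rpow_const fun x _ => Or.inr (by linarith)) ?_).mul hvp
        intro t ht
        have : 0 < u t + ε := by linarith [h.nonneg t ht]
        exact (Real.rpow_pos_of_pos this _).ne'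
      exact (this.mono Ioc_subset_Icc_self).aestronglyMeasurable measurableSet_Ioc
    · filter_upwards [self_mem_nhdsWithin] with ε hε
      have hε : 0 < ε := hε
      refine Eventually.of_forall fun t ht => ?_
      rw [uIoc_of_le hL.le] at ht
      have h0 := h.nonneg t (Ioc_subset_Icc_self ht)
      rw [Real.norm_eq_abs, abs_of_nonneg (by positivity)]
      refine mul_le_of_le_one_left (by positivity) ?_
      rw [div_le_one (by positivity)]
      exact Real.rpow_le_rpow h0 (by linarith) (by linarith)
    · exact hvp.intervalIntegrable_of_Icc hL.le
    · refine Eventually.of_forall fun t ht => ?_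
      rw [uIoc_of_le hL.le] at ht
      rcases ht.2.eq_or_lt with h1 | h1
      · have hp0 : p ≠ 0 := by linarith
        rw [h1, hv.2.2]; simp [Real.zero_rpow hp0]
      · have h0 := h.pos t ⟨ht.1, h1⟩
        have c : ContinuousAt (fun ε : ℝ => ((u t) ^ (p - 1) / (u t + ε) ^ (p - 1) * |v t| ^ p)) 0 := by
          refine (continuousAt_const.div ((continuousAt_const.add continuousAt_id).rpow_const (Or.inr (by linarith))) ?_).mul continuousAt_const
          change (u t + 0) ^ (p - 1) ≠ 0
          rw [add_zero]
          exact (Real.rpow_pos_of_pos h0 _).ne'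
        have := c.tendsto
        simp only [add_zero, div_self (Real.rpow_pos_of_pos h0 (p-1)).ne', one_mul] at this
        exact this.mono_left nhdsWithin_le_nhds
  refine le_of_tendsto (lim.const_mul μ) ?_
  filter_upwards [self_mem_nhdsWithin] with ε hε
  rw [← intervalIntegral.integral_const_mul]
  exact h.picone hp hL v v' hv ε hε

lemma Adm.smul {L : ℝ} {u u' : ℝ → ℝ} (h : Adm L u u') (c : ℝ) :
    Adm L (fun t => c * u t) (fun t => c * u' t) :=
  ⟨⟨fun t ht => (h.1.1 t ht).const_mul c, continuousOn_const.mul h.1.2⟩,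
    by simp [h.2.1], by simp [h.2.2]⟩

lemma Eig.lam {p a L μ : ℝ} {u u' : ℝ → ℝ} (hp : 1 < p) (ha : 0 < a) (hL : 0 < L) (h : Eig p L μ u u') :
    lam1 p a a L = a ^ p * μ := by
  have hp0 : 0 < p := by linarith
  have hup : ContinuousOn (fun s => |u s| ^ p) (Icc 0 L) :=
    h.adm.1.cont.abs.rpow_const fun x _ => Or.inr (by linarith)
  have hI : 0 < ∫ t in (0:ℝ)..L, |u t| ^ p := by
    refine intervalIntegral.intervalIntegral_pos_of_pos_on (hup.intervalIntegrable_of_Icc hL.le) ?_ hL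
    intro t ht
    have := h.pos t ht
    positivity
  set I := ∫ t in (0:ℝ)..L, |u t| ^ p with hIdef
  have hw := h.weak hp hL u u' h.adm
  have hE : (∫ t in (0:ℝ)..L, |u' t| ^ p) = μ * I := by
    rw [hIdef, ← intervalIntegral.integral_const_mul]
    simp only [psi_mul_self hp] at hw
    rw [hw]
    apply intervalIntegral.integral_congr
    intro t ht
    rw [uIcc_of_le hL.le] at ht
    have h0 := h.nonneg t ht
    have := psi_mul_self (s := u t) hp
    rw [psi_of_nonneg hp h0] at this
    simp only [← this, mul_assoc]
  unfold lam1
  apply IsLeast.csInf_eq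
  constructor
  · refine ⟨_, _, h.adm.smul (I ^ (-(1/p))), ?_, ?_⟩
    · have : ∀ t, |I ^ (-(1/p)) * u t| ^ p = I⁻¹ * |u t| ^ p := by
        intro t
        rw [abs_mul, Real.mul_rpow (by positivity) (by positivity), abs_of_nonneg (by positivity), ← Real.rpow_mul hI.le]
        rw [show -(1/p) * p = -1 by field_simp, Real.rpow_neg_one]
      simp only [this]
      rw [intervalIntegral.integral_const_mul]
      exact inv_mul_cancel₀ hI.ne'
    · have : ∀ t, |I ^ (-(1/p)) * u' t| ^ p = I⁻¹ * |u' t| ^ p := by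
        intro t
        rw [abs_mul, Real.mul_rpow (by positivity) (by positivity), abs_of_nonneg (by positivity), ← Real.rpow_mul hI.le]
        rw [show -(1/p) * p = -1 by field_simp, Real.rpow_neg_one]
      simp only [asymE_same _ _ hp, this]
      rw [intervalIntegral.integral_const_mul, intervalIntegral.integral_const_mul, hE]
      field_simp
  · rintro E ⟨v, v', hv, hn, rfl⟩
    simp only [asymE_same _ _ hp]
    rw [intervalIntegral.integral_const_mul]
    have := h.poincare hp hL v v' hv
    rw [hn, mul_one] at this
    gcongr

lemma backward {p a L μ : ℝ} {u u' : ℝ → ℝ} (hp : 1 < p) (ha : 0 < a) (hL : 0 < L) (h : Eig p L μ u u') :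
      IsWeakSol p a a L u u' (fun t => lam1 p a a L * |u t| ^ (p - 2) * u t) ∧
      (∀ t ∈ Set.Ioo (0:ℝ) L, 0 < u t) ∧
      IsWeakSol p a a L (fun t => -u t) (fun t => -u' t)
        (fun t => lam1 p a a L * |u t| ^ (p - 2) * (-u t)) := by
  have main : ∀ φ φ' : ℝ → ℝ, Adm L φ φ' → (∫ t in (0:ℝ)..L, asymFlux p a a (u' t) * φ' t) =
      ∫ t in (0:ℝ)..L, lam1 p a a L * |u t| ^ (p - 2) * u t * φ t := by
    intro φ φ' hφ
    have h1 := h.weak hp hL φ φ' hφ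
    simp only [asymFlux_same, mul_assoc]
    rw [intervalIntegral.integral_const_mul, h1, ← intervalIntegral.integral_const_mul, h.lam hp ha hL]
    apply intervalIntegral.integral_congr
    intro t ht
    rw [uIcc_of_le hL.le] at ht
    simp only [← abs_rpow_mul_self hp (h.nonneg t ht)]
    ring
  refine ⟨⟨h.adm, main⟩, h.pos, ⟨by simpa using h.adm.smul (-1), ?_⟩⟩
  intro φ φ' hφ
  have h1 := main φ φ' hφ
  simp only [asymFlux_same, psi_neg] at h1 ⊢
  simp only [mul_neg, neg_mul, intervalIntegral.integral_neg, h1]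

lemma forward {p a b L : ℝ} (hp : 1 < p) (ha : 0 < a) (hb : 0 < b) (hL : 0 < L) (u u' g : ℝ → ℝ)
    (h1 : IsWeakSol p a b L u u' (fun t => g t * u t)) (hpos : ∀ t ∈ Ioo (0:ℝ) L, 0 < u t)
    (h2 : IsWeakSol p a b L (fun t => -u t) (fun t => -u' t) (fun t => g t * (-u t))) : a = b := by
  by_contra hab
  have hp0 : p ≠ 0 := by linarith
  have habp : a ^ p - b ^ p ≠ 0 := by
    intro h0
    exact hab ((Real.rpow_left_inj ha.le hb.le hp0).1 (by linarith))
  have hu := h1.1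
  have hflux : Continuous (asymFlux p a b) := by
    unfold asymFlux
    exact (continuous_const.mul ((continuous_id.max continuous_const).rpow_const fun x => Or.inr (by linarith))).sub
      (continuous_const.mul ((continuous_id.neg.max continuous_const).rpow_const fun x => Or.inr (by linarith)))
  have hfc : ContinuousOn (fun t => asymFlux p a b (u' t)) (Icc 0 L) :=
    hflux.comp_continuousOn hu.1.2
  have hfc' : ContinuousOn (fun t => asymFlux p a b (-u' t)) (Icc 0 L) :=
    hflux.comp_continuousOn hu.1.2.neg
  have hsum : ∀ s, asymFlux p a b s + asymFlux p a b (-s) = (a ^ p - b ^ p) * |s| ^ (p - 1) := by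
    intro s
    have hp1 : p - 1 ≠ 0 := by linarith
    simp only [asymFlux, neg_neg]
    rcases le_total 0 s with h | h
    · rw [max_eq_left h, max_eq_right (by linarith), Real.zero_rpow hp1, abs_of_nonneg h]; ring
    · rw [max_eq_right h, max_eq_left (by linarith), Real.zero_rpow hp1, abs_of_nonpos h]; ring
  set w : ℝ → ℝ := fun t => |u' t| ^ (p - 1) with hw
  have hwc : ContinuousOn w (Icc 0 L) := hu.1.2.abs.rpow_const fun x _ => Or.inr (by linarith)
  have hA : ∀ φ φ', Adm L φ φ' → ∫ t in (0:ℝ)..L, w t * φ' t = 0 := by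
    intro φ φ' hφ
    have e1 := h1.2 φ φ' hφ
    have e2 := h2.2 φ φ' hφ
    have e3 : ∫ t in (0:ℝ)..L, (a ^ p - b ^ p) * (w t * φ' t) = 0 := by
      calc _ = ∫ t in (0:ℝ)..L, (asymFlux p a b (u' t) * φ' t + asymFlux p a b (-u' t) * φ' t) := by
            congr 1; ext t; rw [← add_mul, hsum, mul_assoc]
        _ = 0 := by
          have i1 : IntervalIntegrable (fun t => asymFlux p a b (u' t) * φ' t) volume 0 L :=
            (hfc.mul hφ.1.2).intervalIntegrable_of_Icc hL.le
          have i2 : IntervalIntegrable (fun t => asymFlux p a b (-u' t) * φ' t) volume 0 L :=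
            (hfc'.mul hφ.1.2).intervalIntegrable_of_Icc hL.le
          rw [intervalIntegral.integral_add i1 i2, e1, e2]
          simp only [mul_neg, neg_mul, intervalIntegral.integral_neg]; ring
    rw [intervalIntegral.integral_const_mul] at e3
    exact (mul_eq_zero.1 e3).resolve_left habp
  set m := (∫ t in (0:ℝ)..L, w t) / L with hm
  have hwi : IntervalIntegrable w volume 0 L := hwc.intervalIntegrable_of_Icc hL.le
  have hd : ContinuousOn (fun t => w t - m) (Icc 0 L) := hwc.sub continuousOn_const
  have hzero : ∫ t in (0:ℝ)..L, (w t - m) = 0 := by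
    rw [intervalIntegral.integral_sub hwi (by simp)]
    simp [hm]; field_simp; simp
  have hadm : Adm L (fun t => ∫ s in (0:ℝ)..t, (w s - m)) (fun t => w t - m) := by
    refine ⟨⟨fun t ht => ?_, hd⟩, by simp, hzero⟩
    have : Fact (t ∈ Icc 0 L) := ⟨ht⟩
    refine intervalIntegral.integral_hasDerivWithinAt_right ?_ ?_ (hd t ht)
    · exact (hd.mono (Icc_subset_Icc le_rfl ht.2)).intervalIntegrable_of_Icc ht.1
    · exact hd.stronglyMeasurableAtFilter_nhdsWithin measurableSet_Icc t
  have hB := hA _ _ hadm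
  have hsq : ∫ t in (0:ℝ)..L, (w t - m) * (w t - m) = 0 := by
    have : ∀ t, (w t - m) * (w t - m) = w t * (w t - m) - m * (w t - m) := fun t => by ring
    simp only [this]
    have i1 : IntervalIntegrable (fun t => w t * (w t - m)) volume 0 L :=
      (hwc.mul hd).intervalIntegrable_of_Icc hL.le
    have i2 : IntervalIntegrable (fun t => m * (w t - m)) volume 0 L :=
      (continuousOn_const.mul hd).intervalIntegrable_of_Icc hL.le
    rw [intervalIntegral.integral_sub i1 i2, intervalIntegral.integral_const_mul, hzero, hB]
    simp
  have hwm : ∀ t ∈ Icc 0 L, w t = m := by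
    intro t ht
    by_contra hne
    have := intervalIntegral.integral_pos hL (hd.mul hd) (fun x _ => mul_self_nonneg _)
      ⟨t, ht, mul_self_pos.2 (sub_ne_zero.2 hne)⟩
    exact this.ne' hsq
  obtain ⟨c, hc, hc0⟩ := exists_hasDerivAt_eq_zero hL hu.1.cont (hu.2.1.trans hu.2.2.symm) fun x hx => hu.1.hasDerivAt hx
  have hp1 : p - 1 ≠ 0 := by linarith
  have hm0 : m = 0 := by
    rw [← hwm c (Ioo_subset_Icc_self hc)]; simp [hw, hc0, Real.zero_rpow hp1]
  obtain ⟨d, hd, hd1⟩ := exists_hasDerivAt_eq_slope u u' (show (0:ℝ) < L / 2 by linarith)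
    (hu.1.cont.mono (Icc_subset_Icc le_rfl (by linarith)))
    (fun x hx => hu.1.hasDerivAt ⟨hx.1, by linarith [hx.2]⟩)
  have hd0 : w d = 0 := (hwm d ⟨hd.1.le, by linarith [hd.2]⟩).trans hm0
  have : u' d = 0 := by
    simp only [hw] at hd0
    rw [Real.rpow_eq_zero (abs_nonneg _) hp1] at hd0
    exact abs_eq_zero.1 hd0
  rw [this, hu.2.1, sub_zero, sub_zero] at hd1
  have := div_pos (hpos (L/2) ⟨by linarith, by linarith⟩) (show (0:ℝ) < L / 2 by linarith)
  linarith


lemma aux_integrable (q : ℝ) (hq : 1 < q) : Integrable (fun s : ℝ => (1 + |s| ^ q)⁻¹) := by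
  have h1 : Integrable (fun x : ℝ => 2 ^ q * (1 + ‖x‖) ^ (-q)) :=
    (integrable_one_add_norm (by simpa using hq)).const_mul _
  have hc : Continuous (fun s : ℝ => (1 + |s| ^ q)⁻¹) := by
    refine Continuous.inv₀ (continuous_const.add (continuous_abs.rpow_const fun x => Or.inr (by linarith))) ?_
    intro x; positivity
  refine h1.mono' hc.aestronglyMeasurable (Eventually.of_forall fun x => ?_)
  have hx := abs_nonneg x
  rw [Real.norm_eq_abs, abs_of_nonneg (by positivity), Real.rpow_neg (by positivity), Real.norm_eq_abs, inv_le_comm₀ (by positivity) (by positivity)]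
  rw [mul_inv, inv_inv, inv_mul_le_iff₀ (by positivity)]
  rcases le_total 1 |x| with h | h
  · calc (1+|x|)^q ≤ (2 * |x|)^q := Real.rpow_le_rpow (by positivity) (by linarith) (by linarith)
      _ = 2^q * |x|^q := Real.mul_rpow (by norm_num) hx
      _ ≤ _ := by gcongr; linarith
  · calc (1+|x|)^q ≤ 2^q := Real.rpow_le_rpow (by positivity) (by linarith) (by linarith)
      _ = 2^q * 1 := by ring
      _ ≤ _ := by
        gcongr
        have : 0 ≤ |x|^q := by positivity
        linarith

lemma aux_S (q : ℝ) (hq : 1 < q) : ∃ (A B : ℝ) (S : ℝ → ℝ), A < B ∧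
    (∀ t ∈ Ioo A B, HasDerivAt S (1 + |S t| ^ q) t) ∧
    Tendsto S (𝓝[>] A) atBot ∧ Tendsto S (𝓝[<] B) atTop := by
  set f : ℝ → ℝ := fun s => (1 + |s| ^ q)⁻¹ with hf
  have hc : Continuous f := by
    refine Continuous.inv₀ (continuous_const.add (continuous_abs.rpow_const fun x => Or.inr (by linarith))) ?_
    intro x; positivity
  have hi : Integrable f := aux_integrable q hq
  have hpos : ∀ x, 0 < f x := fun x => by simp only [hf]; positivity
  set G : ℝ → ℝ := fun x => ∫ s in (0:ℝ)..x, f s with hG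
  have hGd : ∀ x, HasDerivAt G (f x) x := fun x => (hc.integral_hasStrictDerivAt 0 x).hasDerivAt
  have hGm : StrictMono G := strictMono_of_hasDerivAt_pos hGd hpos
  have hGc : Continuous G := continuous_iff_continuousAt.2 fun x => (hGd x).continuousAt
  have hT : Tendsto G atTop (𝓝 (∫ s in Ioi (0:ℝ), f s)) :=
    intervalIntegral_tendsto_integral_Ioi 0 hi.integrableOn tendsto_id
  have hB : Tendsto G atBot (𝓝 (-∫ s in Iic (0:ℝ), f s)) := by
    have := (intervalIntegral_tendsto_integral_Iic (f := f) 0 hi.integrableOn tendsto_id).neg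
    refine this.congr fun x => ?_
    simp only [hG, id]
    rw [intervalIntegral.integral_symm, neg_neg]
  set A := -∫ s in Iic (0:ℝ), f s
  set B := ∫ s in Ioi (0:ℝ), f s
  have hAG : ∀ x, A < G x := fun x =>
    (hGm.monotone.le_of_tendsto hB (x-1)).trans_lt (hGm (by linarith))
  have hGB : ∀ x, G x < B := fun x =>
    (hGm (show x < x + 1 by linarith)).trans_le (hGm.monotone.ge_of_tendsto hT (x+1))
  have hsurj : ∀ t ∈ Ioo A B, ∃ x, G x = t := by
    intro t ht
    obtain ⟨x, hx⟩ := (hB.eventually_lt_const ht.1).exists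
    obtain ⟨y, hy⟩ := (hT.eventually_const_lt ht.2).exists
    exact mem_range_of_exists_le_of_exists_ge hGc ⟨x, hx.le⟩ ⟨y, hy.le⟩
  set S := Function.invFun G with hS
  have hGS : ∀ t ∈ Ioo A B, G (S t) = t := fun t ht => Function.invFun_eq (hsurj t ht)
  have hSG : ∀ x, S (G x) = x := Function.leftInverse_invFun hGm.injective
  have hSm : StrictMonoOn S (Ioo A B) := by
    intro s hs t ht hst
    rw [← hGS s hs, ← hGS t ht] at hst
    exact hGm.lt_iff_lt.1 hst
  have him : S '' Ioo A B = univ := by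
    ext x
    simp only [mem_image, mem_univ, iff_true]
    exact ⟨G x, ⟨hAG x, hGB x⟩, hSG x⟩
  refine ⟨A, B, S, (hAG 0).trans (hGB 0), ?_, ?_, ?_⟩
  · intro t ht
    have hn : Ioo A B ∈ 𝓝 t := Ioo_mem_nhds ht.1 ht.2
    have hct : ContinuousAt S t :=
      hSm.continuousAt_of_image_mem_nhds hn (by rw [him]; exact univ_mem)
    have := HasDerivAt.of_local_left_inverse hct (hGd (S t)) (hpos _).ne'
      (by filter_upwards [hn] with y hy using hGS y hy)
    simpa [hf] using this
  · rw [tendsto_atBot]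
    intro x
    filter_upwards [Ioo_mem_nhdsGT (hAG x)] with t ht
    have : G (S t) = t := hGS t ⟨ht.1, ht.2.trans (hGB x)⟩
    exact (hGm.lt_iff_lt.1 (this.trans_lt ht.2)).le
  · rw [tendsto_atTop]
    intro x
    filter_upwards [Ioo_mem_nhdsLT (hGB x)] with t ht
    have : G (S t) = t := hGS t ⟨(hAG x).trans ht.1, ht.2⟩
    exact (hGm.lt_iff_lt.1 (ht.1.trans_eq this.symm)).le

noncomputable def hfun (p q s : ℝ) : ℝ := -((q / p) * (|s| ^ (q - 2) * s * (1 + |s| ^ q) ^ (-(1 / p))))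

lemma hfun_neg (p q s : ℝ) : hfun p q (-s) = - hfun p q s := by simp [hfun]

lemma hfun_of_nonneg {p q s : ℝ} (hq : 1 < q) (hs : 0 ≤ s) :
    hfun p q s = -((q / p) * (s ^ (q - 1) * (1 + s ^ q) ^ (-(1 / p)))) := by
  rw [hfun, abs_rpow_mul_self hq hs, abs_of_nonneg hs]

lemma hfun_cont {p q : ℝ} (hq : 1 < q) : Continuous (hfun p q) := by
  have : hfun p q = fun s => -((q / p) * (psi q s * (1 + |s| ^ q) ^ (-(1 / p)))) := by
    ext s
    rcases le_total 0 s with h | h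
    · rw [hfun_of_nonneg hq h, psi_of_nonneg hq h, abs_of_nonneg h]
    · obtain ⟨r, rfl⟩ : ∃ r, s = -r := ⟨-s, by simp⟩
      have h : 0 ≤ r := by linarith
      rw [hfun_neg, psi_neg, hfun_of_nonneg hq h, psi_of_nonneg hq h, abs_neg, abs_of_nonneg h]
      ring
  rw [this]
  refine (continuous_const.mul ((psi_cont hq).mul ?_)).neg
  refine (continuous_const.add (continuous_abs.rpow_const fun x => Or.inr (by linarith))).rpow_const fun x => Or.inl ?_
  have : 0 < 1 + |x| ^ q := by positivity
  exact this.ne'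

lemma hfun_atTop {p q : ℝ} (hp : 1 < p) (hq : q = p / (p - 1)) :
    Tendsto (hfun p q) atTop (𝓝 (-(q / p))) := by
  have hp1 : 0 < p - 1 := by linarith
  have hq1 : 1 < q := by rw [hq, lt_div_iff₀ hp1]; linarith
  have e : q - 1 = q * (1 / p) := by rw [hq]; field_simp; ring
  have h1 : Tendsto (fun s : ℝ => 1 - (1 + s ^ q)⁻¹) atTop (𝓝 (1 - 0)) :=
    tendsto_const_nhds.sub (tendsto_inv_atTop_zero.comp
      (tendsto_atTop_add_const_left _ _ (tendsto_rpow_atTop (by linarith))))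
  have h2 := (h1.rpow_const (p := 1 / p) (Or.inr (by positivity))).const_mul (q / p) |>.neg
  rw [sub_zero, Real.one_rpow, mul_one] at h2
  refine h2.congr' ?_
  filter_upwards [eventually_ge_atTop 0] with s hs
  rw [hfun_of_nonneg hq1 hs]
  have hD : 0 < 1 + s ^ q := by positivity
  rw [show 1 - (1 + s ^ q)⁻¹ = s ^ q / (1 + s ^ q) by field_simp; ring,
    Real.div_rpow (by positivity) hD.le, ← Real.rpow_mul hs, ← e, Real.rpow_neg hD.le]
  ring

lemma hfun_atBot {p q : ℝ} (hp : 1 < p) (hq : q = p / (p - 1)) :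
    Tendsto (hfun p q) atBot (𝓝 (q / p)) := by
  have := ((hfun_atTop hp hq).comp tendsto_neg_atBot_atTop).neg
  rw [neg_neg] at this
  refine this.congr fun s => ?_
  simp [hfun_neg]

lemma psi_hfun {p q : ℝ} (s : ℝ) (hp : 1 < p) (hq : q = p / (p - 1)) :
    psi p (hfun p q s) = -((q / p) ^ (p - 1) * (s * (1 + |s| ^ q) ^ (-((p - 1) / p)))) := by
  have hp1 : 0 < p - 1 := by linarith
  have hq1 : 1 < q := by rw [hq, lt_div_iff₀ hp1]; linarith
  have e : (q - 1) * (p - 1) = 1 := by rw [hq]; field_simp; ring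
  have key : ∀ s : ℝ, 0 ≤ s → psi p (hfun p q s) = -((q / p) ^ (p - 1) * (s * (1 + |s| ^ q) ^ (-((p - 1) / p)))) := by
    intro s hs
    have hD : 0 < 1 + s ^ q := by positivity
    have hqp : 0 < q / p := by positivity
    rw [hfun_of_nonneg hq1 hs, psi_neg, psi_mul hp hqp, psi_of_nonneg hp (by positivity),
      Real.mul_rpow (by positivity) (by positivity), ← Real.rpow_mul hs, e, Real.rpow_one,
      ← Real.rpow_mul hD.le, abs_of_nonneg hs]
    congr 5; ring
  rcases le_total 0 s with h | h
  · exact key s h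
  · have := key (-s) (by linarith)
    rw [hfun_neg, psi_neg, abs_neg] at this
    rw [← neg_neg (psi p _), this]; ring

lemma abs_rpow_aux {q s : ℝ} (hq : 1 < q) : s * (|s| ^ (q - 2) * s) = |s| ^ q := by
  rw [show s * (|s| ^ (q - 2) * s) = |s| ^ (q - 2) * (s * s) by ring, ← abs_mul_abs_self s, ← mul_assoc]
  have h1 := abs_rpow_mul_self (u := |s|) hq (abs_nonneg s)
  rw [abs_abs] at h1
  rw [h1, ← psi_of_nonneg hq (abs_nonneg s), psi_mul_self hq, abs_abs]

lemma exists_eig0 (p : ℝ) (hp : 1 < p) : ∃ (A B μ : ℝ) (u u' : ℝ → ℝ), A < B ∧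
    C1On A B u u' ∧ u A = 0 ∧ u B = 0 ∧ (∀ t ∈ Ioo A B, 0 < u t) ∧
    ∀ t ∈ Ioo A B, HasDerivAt (fun s => psi p (u' s)) (-(μ * (u t) ^ (p - 1))) t := by
  have hp1 : 0 < p - 1 := by linarith
  have hp0 : 0 < p := by linarith
  obtain ⟨q, hq⟩ : ∃ q, q = p / (p - 1) := ⟨_, rfl⟩
  have hq1 : 1 < q := by rw [hq, lt_div_iff₀ hp1]; linarith
  obtain ⟨A, B, S, hAB, hS, hSA, hSB⟩ := aux_S q hq1
  have hSc : ContinuousOn S (Ioo A B) := fun t ht => (hS t ht).continuousAt.continuousWithinAt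
  have hDpos : ∀ s : ℝ, 0 < 1 + |s| ^ q := fun s => by positivity
  set V : ℝ → ℝ := fun t => (1 + |S t| ^ q) ^ (-(1 / p)) with hV
  have hDd : ∀ t ∈ Ioo A B, HasDerivAt (fun t => 1 + |S t| ^ q) (q * |S t| ^ (q - 2) * S t * (1 + |S t| ^ q)) t :=
    fun t ht => ((hasDerivAt_abs_rpow (S t) hq1).comp t (hS t ht)).const_add 1
  have hVd : ∀ t ∈ Ioo A B, HasDerivAt V (hfun p q (S t)) t := by
    intro t ht
    have := (hDd t ht).rpow_const (p := -(1 / p)) (Or.inl (hDpos _).ne')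
    refine this.congr_deriv ?_
    rw [Real.rpow_sub (hDpos _), Real.rpow_one, hfun]
    have := (hDpos (S t)).ne'
    field_simp
  have habs0 : Tendsto (fun s : ℝ => (1 + s ^ q) ^ (-(1 / p))) atTop (𝓝 0) :=
    (tendsto_rpow_neg_atTop (by positivity)).comp
      (tendsto_atTop_add_const_left _ _ (tendsto_rpow_atTop (by linarith)))
  have hVA : Tendsto V (𝓝[>] A) (𝓝 0) := habs0.comp (tendsto_abs_atBot_atTop.comp hSA)
  have hVB : Tendsto V (𝓝[<] B) (𝓝 0) := habs0.comp (tendsto_abs_atTop_atTop.comp hSB)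
  have hHA : Tendsto (fun t => hfun p q (S t)) (𝓝[>] A) (𝓝 (q / p)) := (hfun_atBot hp hq).comp hSA
  have hHB : Tendsto (fun t => hfun p q (S t)) (𝓝[<] B) (𝓝 (-(q / p))) := (hfun_atTop hp hq).comp hSB
  have hHc : ContinuousOn (fun t => hfun p q (S t)) (Ioo A B) := (hfun_cont hq1).comp_continuousOn hSc
  classical
  set U : ℝ → ℝ := (Ioo A B).indicator V with hU
  set U' : ℝ → ℝ := extendFrom (Ioo A B) (fun t => hfun p q (S t)) with hU'
  have hUV : ∀ t ∈ Ioo A B, U t = V t := fun t ht => indicator_of_mem ht _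
  have hU'h : ∀ t ∈ Ioo A B, U' t = hfun p q (S t) := fun t ht => extendFrom_extends hHc t ht
  have hUA : U A = 0 := indicator_of_notMem (by simp) _
  have hUB : U B = 0 := indicator_of_notMem (by simp) _
  have hUd : ∀ t ∈ Ioo A B, HasDerivAt U (hfun p q (S t)) t := by
    intro t ht
    refine (hVd t ht).congr_of_eventuallyEq ?_
    filter_upwards [Ioo_mem_nhds ht.1 ht.2] with y hy using hUV y hy
  have hdiff : DifferentiableOn ℝ U (Ioo A B) := fun t ht => (hUd t ht).differentiableAt.differentiableWithinAt
  refine ⟨A, B, (q / p) ^ (p - 1), U, U', hAB, ⟨?_, continuousOn_Icc_extendFrom_Ioo hHc hHA hHB⟩, hUA, hUB, ?_, ?_⟩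
  · intro t ht
    rcases ht.1.eq_or_lt with h0 | h0
    · subst h0
      rw [hU', eq_lim_at_left_extendFrom_Ioo hAB hHA]
      refine (hasDerivWithinAt_Ici_of_tendsto_deriv hdiff ?_ (Ioo_mem_nhdsGT hAB) ?_).mono Icc_subset_Ici_self
      · rw [ContinuousWithinAt, hUA]
        refine (hVA.mono_left (nhdsWithin_mono _ Ioo_subset_Ioi_self)).congr' ?_
        filter_upwards [self_mem_nhdsWithin] with y hy using (hUV y hy).symm
      · refine hHA.congr' ?_
        filter_upwards [Ioo_mem_nhdsGT hAB] with y hy using (hUd y hy).deriv.symm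
    rcases ht.2.eq_or_lt with h1 | h1
    · subst h1
      rw [hU', eq_lim_at_right_extendFrom_Ioo hAB hHB]
      refine (hasDerivWithinAt_Iic_of_tendsto_deriv hdiff ?_ (Ioo_mem_nhdsLT hAB) ?_).mono Icc_subset_Iic_self
      · rw [ContinuousWithinAt, hUB]
        refine (hVB.mono_left (nhdsWithin_mono _ Ioo_subset_Iio_self)).congr' ?_
        filter_upwards [self_mem_nhdsWithin] with y hy using (hUV y hy).symm
      · refine hHB.congr' ?_
        filter_upwards [Ioo_mem_nhdsLT hAB] with y hy using (hUd y hy).deriv.symm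
    rw [hU'h t ⟨h0, h1⟩]
    exact (hUd t ⟨h0, h1⟩).hasDerivWithinAt
  · intro t ht
    rw [hUV t ht]
    exact Real.rpow_pos_of_pos (hDpos _) _
  · intro t ht
    have d : HasDerivAt (fun t => -((q / p) ^ (p - 1) * (S t * (1 + |S t| ^ q) ^ (-((p - 1) / p)))))
        (-((q / p) ^ (p - 1) * (U t) ^ (p - 1))) t := by
      have h1 := (hDd t ht).rpow_const (p := -((p - 1) / p)) (Or.inl (hDpos _).ne')
      have h2 := (((hS t ht).mul h1).const_mul ((q / p) ^ (p - 1))).neg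
      refine h2.congr_deriv ?_
      rw [hUV t ht, hV]
      simp only
      rw [← Real.rpow_mul (hDpos _).le, Real.rpow_sub (hDpos _), Real.rpow_one,
        show -(1 / p) * (p - 1) = -((p - 1) / p) by ring]
      have h3 := abs_rpow_aux (s := S t) hq1
      have hD := (hDpos (S t)).ne'
      have h4 : (p - 1) / p * q = 1 := by rw [hq]; field_simp
      congr 2
      have : S t * (q * |S t| ^ (q - 2) * S t * (1 + |S t| ^ q) * -((p - 1) / p) * ((1 + |S t| ^ q) ^ (-((p - 1) / p)) / (1 + |S t| ^ q)))
        = -((p - 1) / p * q) * (S t * (|S t| ^ (q - 2) * S t)) * (1 + |S t| ^ q) ^ (-((p - 1) / p)) := by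
        generalize (1 + |S t| ^ q) ^ (-((p - 1) / p)) = X
        field_simp
      rw [this, h3, h4]
      ring
    refine d.congr_of_eventuallyEq ?_
    filter_upwards [Ioo_mem_nhds ht.1 ht.2] with y hy
    rw [hU'h y hy, psi_hfun _ hp hq]

lemma exists_eig (p L : ℝ) (hp : 1 < p) (hL : 0 < L) : ∃ (μ : ℝ) (u u' : ℝ → ℝ), Eig p L μ u u' := by
  obtain ⟨A, B, μ, u, u', hAB, ⟨hd, hc⟩, hA, hB, hpos, hode⟩ := exists_eig0 p hp
  obtain ⟨k, hk⟩ : ∃ k, k = (B - A) / L := ⟨_, rfl⟩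
  have hk0 : 0 < k := by rw [hk]; exact div_pos (by linarith) hL
  have hkL : A + k * L = B := by rw [hk]; field_simp; ring
  have m1 : MapsTo (fun t => A + k * t) (Icc 0 L) (Icc A B) := by
    intro t ht
    have h1 := mul_le_mul_of_nonneg_left ht.2 hk0.le
    have h2 := mul_nonneg hk0.le ht.1
    exact ⟨by simp only; linarith, by simp only; linarith⟩
  have m2 : ∀ t ∈ Ioo 0 L, A + k * t ∈ Ioo A B := by
    intro t ht
    have h1 := mul_lt_mul_of_pos_left ht.2 hk0
    have h2 := mul_pos hk0 ht.1
    exact ⟨by linarith, by linarith⟩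
  have da : ∀ t, HasDerivAt (fun t => A + k * t) k t := fun t => by
    simpa using ((hasDerivAt_id t).const_mul k).const_add A
  refine ⟨k ^ (p - 1) * k * μ, fun t => u (A + k * t), fun t => k * u' (A + k * t), ⟨⟨⟨?_, ?_⟩, ?_, ?_⟩, ?_, ?_⟩⟩
  · intro t ht
    have := (hd _ (m1 ht)).comp t (da t).hasDerivWithinAt m1
    exact this.congr_deriv (by ring)
  · exact continuousOn_const.mul (hc.comp (by fun_prop) m1)
  · simpa using hA
  · simpa [hkL] using hB
  · exact fun t ht => hpos _ (m2 t ht)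
  · intro t ht
    simp only [psi_mul hp hk0]
    have := ((hode _ (m2 t ht)).comp t (da t)).const_mul (k ^ (p - 1))
    exact this.congr_deriv (by ring)

theorem stmt5 (p a b L : ℝ) (hp : 1 < p) (ha : 0 < a) (hb : 0 < b) (hL : 0 < L) :
    (∃ u u' : ℝ → ℝ,
      IsWeakSol p a b L u u' (fun t => lam1 p a b L * |u t| ^ (p - 2) * u t) ∧
      (∀ t ∈ Set.Ioo (0:ℝ) L, 0 < u t) ∧
      IsWeakSol p a b L (fun t => -u t) (fun t => -u' t)
        (fun t => lam1 p a b L * |u t| ^ (p - 2) * (-u t))) ↔ a = b := by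
  constructor
  · rintro ⟨u, u', h1, h2, h3⟩
    exact forward hp ha hb hL u u' _ h1 h2 h3
  · rintro rfl
    obtain ⟨μ, u, u', h⟩ := exists_eig p L hp hL
    exact ⟨u, u', backward hp ha hL h⟩
end

section
/- (Asymmetric Picone inequality) Let p > 1, a, b > 0 and let u, v be differentiable real functions on an open interval I with u ≥ 0 and v > 0 on I. Then at every point of I, a^p [(u')⁺]^p + b^p [(u')⁻]^p ≥ (u^p / v^{p−1})' · ( a^p [(v')⁺]^{p−1} − b^p [(v')⁻]^{p−1} ), where (u^p / v^{p−1})' denotes the derivative of the function t ↦ u(t)^p / v(t)^{p−1}. -/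
open Set

theorem young_aux_s9 (p x w : ℝ) (hp : 1 < p) (hx : 0 ≤ x) (hw : 0 ≤ w) :
    p * w ^ (p - 1) * x ≤ x ^ p + (p - 1) * (w ^ (p - 1) * w) := by
  have h0 : 0 < p - 1 := by linarith
  have hq : p.HolderConjugate (p / (p - 1)) := Real.HolderConjugate.conjExponent hp
  have h := Real.young_inequality_of_nonneg hx (Real.rpow_nonneg hw (p - 1)) hq
  have e1 : (w ^ (p - 1)) ^ (p / (p - 1)) = w ^ (p - 1) * w := by
    rw [← Real.rpow_mul hw, mul_div_cancel₀ _ h0.ne']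
    rw [← Real.rpow_add_one' hw (by linarith)]
    congr 1; ring
  rw [e1] at h
  have h2 := mul_le_mul_of_nonneg_left h (by linarith : (0:ℝ) ≤ p)
  have e2 : p * (x ^ p / p + w ^ (p - 1) * w / (p / (p - 1))) =
      x ^ p + (p - 1) * (w ^ (p - 1) * w) := by
    field_simp
  rw [e2] at h2
  linarith

theorem flux_aux (p k r U s x : ℝ) (hp : 1 < p) (hk : 0 ≤ k) (hr : 0 ≤ r) (hs : 0 ≤ s)
    (hx : 0 ≤ x) (hU : U ≤ x) :
    (p * r ^ (p - 1) * U - (p - 1) * (r ^ (p - 1) * r) * s) * (k * s ^ (p - 1)) ≤ k * x ^ p := by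
  have h := young_aux_s9 p x (r * s) hp hx (mul_nonneg hr hs)
  have hw : 0 ≤ p * (r * s) ^ (p - 1) :=
    mul_nonneg (by linarith) (Real.rpow_nonneg (mul_nonneg hr hs) _)
  have h1 := mul_le_mul_of_nonneg_left hU hw
  have h2 := mul_le_mul_of_nonneg_left (h1.trans h) hk
  rw [Real.mul_rpow hr hs] at h2
  linarith

theorem stmt9 (p a b : ℝ) (hp : 1 < p) (ha : 0 < a) (hb : 0 < b)
    (c d : ℝ) (u v u' v' : ℝ → ℝ)
    (hu : ∀ t ∈ Set.Ioo c d, HasDerivAt u (u' t) t)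
    (hv : ∀ t ∈ Set.Ioo c d, HasDerivAt v (v' t) t)
    (hu0 : ∀ t ∈ Set.Ioo c d, 0 ≤ u t)
    (hv0 : ∀ t ∈ Set.Ioo c d, 0 < v t) :
    ∀ t ∈ Set.Ioo c d,
      deriv (fun s => u s ^ p / v s ^ (p - 1)) t * asymFlux p a b (v' t) ≤
        asymE p a b (u' t) := by
  intro t ht
  have hut := hu0 t ht
  have hvt := hv0 t ht
  have hB : 0 < v t ^ (p - 1) := Real.rpow_pos_of_pos hvt _
  have hd : HasDerivAt (fun s => u s ^ p / v s ^ (p - 1)) _ t :=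
    ((hu t ht).rpow_const (Or.inr hp.le)).div
      ((hv t ht).rpow_const (p := p - 1) (Or.inl hvt.ne')) hB.ne'
  have e : deriv (fun s => u s ^ p / v s ^ (p - 1)) t =
      p * (u t / v t) ^ (p - 1) * u' t
        - (p - 1) * ((u t / v t) ^ (p - 1) * (u t / v t)) * v' t := by
    rw [hd.deriv, Real.div_rpow hut hvt.le, Real.rpow_sub_one hvt.ne' (p - 1)]
    have : u t ^ p = u t ^ (p - 1) * u t := by
      rw [← Real.rpow_add_one' hut (by linarith)]
      congr 1; ring
    rw [this]
    field_simp
  rw [e]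
  have hr : 0 ≤ u t / v t := div_nonneg hut hvt.le
  have hap := Real.rpow_nonneg ha.le p
  have hbp := Real.rpow_nonneg hb.le p
  have hE1 := mul_nonneg hap (Real.rpow_nonneg (le_max_right (u' t) 0) p)
  have hE2 := mul_nonneg hbp (Real.rpow_nonneg (le_max_right (-u' t) 0) p)
  have hz : (0:ℝ) ^ (p - 1) = 0 := Real.zero_rpow (by linarith)
  unfold asymFlux asymE
  rcases le_total 0 (v' t) with hs | hs
  · have h := flux_aux p (a ^ p) _ (u' t) (v' t) _ hp hap hr hs (le_max_right (u' t) 0)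
      (le_max_left _ _)
    rw [max_eq_left hs, max_eq_right (by linarith : -v' t ≤ 0), hz]
    linarith
  · have h := flux_aux p (b ^ p) _ (-u' t) (-v' t) _ hp hbp hr (by linarith)
      (le_max_right (-u' t) 0) (le_max_left _ _)
    rw [max_eq_right hs, max_eq_left (by linarith : 0 ≤ -v' t), hz]
    linarith
end
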